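/- arXiv:2112.14711 — 2 statements merged into one kernel-verified Lean document; each statement's English description precedes it below -/
import Mathlib

section
/- Let R be an infinite principal ideal domain with fraction field K, let P ∈ K[X] be an integrally valued polynomial, and let p be a prime element of R. Then there exists ν ∈ ℕ, ν ≥ 1, such that for all a, b ∈ R: if p^ν divides a − b in R, then p divides P(a) − P(b) in R. -/
open Polynomial

/-!
Clearing denominators gives a nonzero `d` and `Q ∈ R[X]` with `Q = d P`. As `a - b` divides
`Q(a) - Q(b)`, it divides `d (P(a) - P(b))`. If `k` is the exact power of `p` in `d`, then
passing from `d (P(a) - P(b))` to `P(a) - P(b)` costs at most `k` factors of `p`.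
-/

section IntegrallyValued

variable {R S : Type*} [CommRing R] [CommRing S] [Algebra R S]
  (M : Submonoid R) [IsLocalization M S] (P : S[X]) (v : R → R)

theorem exists_eval_eq_mul_of_algebraMap_eq_eval (hM : M ≤ nonZeroDivisors R)
    (hval : ∀ m, algebraMap R S (v m) = P.eval (algebraMap R S m)) :
    ∃ d ∈ M, ∃ Q : R[X], ∀ m, Q.eval m = d * v m := by
  obtain ⟨d, hd, hQ⟩ := IsLocalization.integerNormalization_spec M P
  refine ⟨d, hd, IsLocalization.integerNormalization M P, fun m ↦ IsLocalization.injective S hM ?_⟩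
  rw [← eval_map_apply, hQ, eval_smul, map_mul, hval, Algebra.smul_def]

theorem exists_sub_dvd_mul_sub_of_algebraMap_eq_eval (hM : M ≤ nonZeroDivisors R)
    (hval : ∀ m, algebraMap R S (v m) = P.eval (algebraMap R S m)) :
    ∃ d ∈ M, ∀ a b, a - b ∣ d * (v a - v b) := by
  obtain ⟨d, hd, Q, hQ⟩ := exists_eval_eq_mul_of_algebraMap_eq_eval M P v hM hval
  refine ⟨d, hd, fun a b ↦ ?_⟩
  simpa only [hQ, ← mul_sub] using sub_dvd_eval_sub a b Q

end IntegrallyValued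

theorem pow_dvd_of_pow_multiplicity_add_dvd_mul {α : Type*} [CommMonoidWithZero α]
    [IsCancelMulZero α] {p d x : α} {n : ℕ} (hp : Prime p) (hd : FiniteMultiplicity p d)
    (h : p ^ (multiplicity p d + n) ∣ d * x) : p ^ n ∣ x := by
  obtain ⟨e, hde, hpe⟩ := hd.exists_eq_pow_mul_and_not_dvd
  have hpow : p ^ multiplicity p d * p ^ n ∣ p ^ multiplicity p d * (e * x) := by
    rwa [← pow_add, ← mul_assoc, ← hde]
  have hex : p ^ n ∣ e * x :=
    (mul_dvd_mul_iff_left (pow_ne_zero _ hp.ne_zero)).mp hpow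
  exact hp.pow_dvd_of_dvd_mul_left n hpe hex

theorem stmt9_general {R K : Type*} [CommRing R] [IsDomain R] [WfDvdMonoid R]
    [CommRing K] [Algebra R K] [IsFractionRing R K] (P : K[X]) (v : R → R)
    (hval : ∀ m, algebraMap R K (v m) = P.eval (algebraMap R K m))
    (p : R) (hp : Prime p) :
    ∃ k : ℕ, ∀ (n : ℕ) (a b : R), p ^ (k + n) ∣ a - b → p ^ n ∣ v a - v b := by
  obtain ⟨d, hd, hdvd⟩ :=
    exists_sub_dvd_mul_sub_of_algebraMap_eq_eval (nonZeroDivisors R) P v le_rfl hval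
  have hfin : FiniteMultiplicity p d :=
    .of_not_isUnit hp.not_isUnit (nonZeroDivisors.ne_zero hd)
  exact ⟨multiplicity p d, fun n a b hab ↦
    pow_dvd_of_pow_multiplicity_add_dvd_mul hp hfin (hab.trans (hdvd a b))⟩

/-- If `P ∈ K[X]` is integrally valued (values witnessed by `v : R → R`)
and `p` is a prime element of `R`, then there is `ν ≥ 1` such that `a ≡ b (mod p^ν)` implies
`P(a) ≡ P(b) (mod p)`. -/
theorem stmt9 {R K : Type*} [CommRing R] [IsDomain R] [IsPrincipalIdealRing R]
    [Infinite R] [Field K] [Algebra R K] [IsFractionRing R K]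
    (P : K[X]) (v : R → R)
    (hval : ∀ m, algebraMap R K (v m) = P.eval (algebraMap R K m))
    (p : R) (hp : Prime p) :
    ∃ ν : ℕ, 1 ≤ ν ∧ ∀ a b : R, p ^ ν ∣ a - b → p ∣ v a - v b := by
  obtain ⟨k, hk⟩ := stmt9_general P v hval p hp
  exact ⟨k + 1, k.succ_pos, by simpa only [pow_one] using hk 1⟩
end

section
/- Let R be an infinite principal ideal domain with fraction field K. Every nonconstant totally primitive polynomial P ∈ K[X] can be written, uniquely up to units of R and up to the order of the factors, in the form P(X) = (1/Γ) · P_1(X)^{α_1} · P_2(X)^{α_2} ⋯ P_n(X)^{α_n}, where each α_i ≥ 1, Γ ∈ R is nonzero, the P_i are pairwise non-associate totally primitive polynomials that are irreducible in K[X], and Γ is a greatest common divisor of the value set {∏_i P_i(m)^{α_i} : m ∈ R}. -/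
open Polynomial

/-!
Over a unique factorization domain `R`, two nonzero totally primitive polynomials that are
proportional over `K` differ by a unit of `R`. Indeed, if `v = (a / b) W` for families of elements
of `R` and no prime divides all values of `v`, then `a ∣ b v m` for every `m`, so `a ∣ b`.

Over the infinite domain `R`, every nonzero polynomial of `K[X]` has a totally primitive multiple.
Normalizing in this way the irreducible factors of `P` gives `P = e ∏ Pᵢ ^ αᵢ` with `e ∈ K`, and the
remark above yields `e = 1 / Γ` with `Γ ∈ R`. The values of `∏ Pᵢ ^ αᵢ` are `Γ` times those of `P`,
which have no common prime divisor, so `Γ` is automatically a greatest common divisor of the former.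
Uniqueness is that of factorization in `K[X]`, the units being controlled by the same remark.
-/

section PrimePowerSystem

variable {M ι κ : Type*} [CommMonoidWithZero M]

lemma exists_associated_of_dvd_prod_pow [IsCancelMulZero M] [Fintype κ] {r : κ → M} {p : M}
    (hp : Prime p) (hr : ∀ j, Prime (r j)) {β : κ → ℕ} (hdvd : p ∣ ∏ j, r j ^ β j) :
    ∃ j, Associated p (r j) := by
  obtain ⟨j, -, hj⟩ := (hp.dvd_finsetProd_iff _).1 hdvd
  exact ⟨j, hp.associated_of_dvd (hr j) (hp.dvd_of_dvd_pow hj)⟩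

/-- Pairwise non-associated primes `q i` together with positive exponents `α i`: the data of a prime
factorization `∏ i, q i ^ α i` in which equal primes have been collected. -/
structure IsPrimePowerSystem (q : ι → M) (α : ι → ℕ) : Prop where
  prime : ∀ i, Prime (q i)
  one_le : ∀ i, 1 ≤ α i
  not_associated : ∀ i j, i ≠ j → ¬ Associated (q i) (q j)

namespace IsPrimePowerSystem

variable {q : ι → M} {α : ι → ℕ} {r : κ → M} {β : κ → ℕ}

lemma eq_of_associated (hq : IsPrimePowerSystem q α) {i j : ι} (h : Associated (q i) (q j)) :
    i = j :=
  not_imp_not.1 (hq.not_associated i j) h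

lemma of_associated {q' : ι → M} (hq : IsPrimePowerSystem q α)
    (h : ∀ i, Associated (q i) (q' i)) : IsPrimePowerSystem q' α where
  prime i := (h i).prime (hq.prime i)
  one_le := hq.one_le
  not_associated i j hij h' := hq.not_associated i j hij ((h i).trans (h'.trans (h j).symm))

variable [Fintype ι] [Fintype κ]

lemma dvd_prod_pow (hq : IsPrimePowerSystem q α) (i : ι) : q i ∣ ∏ j, q j ^ α j :=
  (dvd_pow_self _ (Nat.one_le_iff_ne_zero.1 (hq.one_le i))).trans
    (Finset.dvd_prod_of_mem (fun j => q j ^ α j) (Finset.mem_univ i))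

variable [IsCancelMulZero M]

lemma emultiplicity_prod_pow (hq : IsPrimePowerSystem q α) (i : ι) :
    emultiplicity (q i) (∏ j, q j ^ α j) = α i := by
  have hp := hq.prime i
  rw [Finset.emultiplicity_prod hp, Finset.sum_eq_single i]
  · exact emultiplicity_pow_self hp.ne_zero hp.not_isUnit _
  · intro j _ hji
    refine emultiplicity_eq_zero.2 fun hdvd => hji.symm (hq.eq_of_associated ?_)
    exact hp.associated_of_dvd (hq.prime j) (hp.dvd_of_dvd_pow hdvd)
  · simp

theorem exists_equiv (hq : IsPrimePowerSystem q α) (hr : IsPrimePowerSystem r β)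
    (h : Associated (∏ i, q i ^ α i) (∏ j, r j ^ β j)) :
    ∃ σ : ι ≃ κ, (∀ i, β (σ i) = α i) ∧ ∀ i, Associated (q i) (r (σ i)) := by
  choose f hf using fun i =>
    exists_associated_of_dvd_prod_pow (hq.prime i) hr.prime ((hq.dvd_prod_pow i).trans h.dvd)
  choose g hg using fun j =>
    exists_associated_of_dvd_prod_pow (hr.prime j) hq.prime ((hr.dvd_prod_pow j).trans h.symm.dvd)
  let σ : ι ≃ κ :=
    { toFun := f
      invFun := g
      left_inv := fun i => (hq.eq_of_associated ((hf i).trans (hg (f i)))).symm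
      right_inv := fun j => (hr.eq_of_associated ((hg j).trans (hf (g j)))).symm }
  have hσ (i) : Associated (q i) (r (σ i)) := hf i
  refine ⟨σ, fun i => ?_, hσ⟩
  have hmult : (β (σ i) : ℕ∞) = α i := calc
    (β (σ i) : ℕ∞) = emultiplicity (r (σ i)) (∏ j, r j ^ β j) :=
      (hr.emultiplicity_prod_pow (σ i)).symm
    _ = emultiplicity (q i) (∏ i, q i ^ α i) := by
      rw [← emultiplicity_eq_of_associated_left (hσ i), emultiplicity_eq_of_associated_right h]
    _ = α i := hq.emultiplicity_prod_pow i
  exact_mod_cast hmult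

end IsPrimePowerSystem

theorem exists_isPrimePowerSystem_associated_prod_pow [UniqueFactorizationMonoid M] {a : M}
    (ha : a ≠ 0) : ∃ (n : ℕ) (q : Fin n → M) (α : Fin n → ℕ),
      IsPrimePowerSystem q α ∧ Associated (∏ i, q i ^ α i) a := by
  classical
  let : StrongNormalizationMonoid M := UniqueFactorizationMonoid.strongNormalizationMonoid
  let factors := UniqueFactorizationMonoid.normalizedFactors a
  let e := factors.toFinset.equivFin.symm
  have mem_factors (i) : (e i : M) ∈ factors := Multiset.mem_toFinset.1 (e i).2
  refine ⟨_, fun i => e i, fun i => factors.count (e i : M), ⟨fun i => ?_, fun i => ?_, ?_⟩, ?_⟩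
  · exact UniqueFactorizationMonoid.prime_of_normalized_factor _ (mem_factors i)
  · exact Multiset.one_le_count_iff_mem.2 (mem_factors i)
  · intro i j hij hassoc
    have hnorm := normalize_eq_normalize_iff_associated.2 hassoc
    rw [UniqueFactorizationMonoid.normalize_normalized_factor _ (mem_factors i),
      UniqueFactorizationMonoid.normalize_normalized_factor _ (mem_factors j)] at hnorm
    exact hij (e.injective (Subtype.ext hnorm))
  · have hprod : ∏ i, (e i : M) ^ factors.count (e i : M) = factors.prod := by
      rw [e.prod_comp fun x => (x : M) ^ factors.count (x : M), Finset.prod_multiset_count]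
      exact Finset.prod_coe_sort _ fun x => x ^ factors.count x
    rw [hprod]
    exact UniqueFactorizationMonoid.prod_normalizedFactors ha

end PrimePowerSystem

section NoCommonPrimeDivisor

variable {M ι : Type*} [CommMonoidWithZero M]

lemma exists_eq_mul_forall_prime_exists_not_dvd [IsCancelMulZero M] [WfDvdMonoid M] (f : ι → M)
    (hf : ∃ i, f i ≠ 0) :
    ∃ (g : M) (w : ι → M), (∀ i, f i = g * w i) ∧ ∀ p, Prime p → ∃ i, ¬ p ∣ w i := by
  obtain ⟨i₀, hi₀⟩ := hf
  have wf : WellFounded (DvdNotUnit (α := M)) := wellFounded_dvdNotUnit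
  induction hx : f i₀ using wf.induction generalizing f with
  | _ x ih =>
    by_cases hprim : ∀ p, Prime p → ∃ i, ¬ p ∣ f i
    · exact ⟨1, f, fun i => (one_mul _).symm, hprim⟩
    · push Not at hprim
      obtain ⟨p, hp, hpf⟩ := hprim
      choose f' hf' using hpf
      have hf'0 : f' i₀ ≠ 0 := right_ne_zero_of_mul (hf' i₀ ▸ hi₀)
      have hlt : DvdNotUnit (f' i₀) x :=
        ⟨hf'0, p, hp.not_isUnit, by rw [← hx, hf' i₀, mul_comm]⟩
      obtain ⟨g, w, hgw, hw⟩ := ih _ hlt f' hf'0 rfl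
      exact ⟨p * g, w, fun i => by rw [hf', hgw, mul_assoc], hw⟩

variable [UniqueFactorizationMonoid M] {v : ι → M}

lemma isUnit_of_forall_dvd (hv0 : ∃ i, v i ≠ 0) (hv : ∀ p, Prime p → ∃ i, ¬ p ∣ v i) {d : M}
    (hd : ∀ i, d ∣ v i) : IsUnit d := by
  obtain ⟨i, hi⟩ := hv0
  by_contra hunit
  obtain ⟨p, hp, hpd⟩ :=
    WfDvdMonoid.exists_irreducible_factor hunit (ne_zero_of_dvd_ne_zero hi (hd i))
  obtain ⟨j, hj⟩ := hv p hp.prime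
  exact hj (hpd.trans (hd j))

lemma dvd_of_forall_dvd_mul (hv0 : ∃ i, v i ≠ 0) (hv : ∀ p, Prime p → ∃ i, ¬ p ∣ v i) {c d : M}
    (hd : ∀ i, d ∣ c * v i) : d ∣ c := by
  rcases eq_or_ne c 0 with rfl | hc
  · exact dvd_zero d
  obtain ⟨d', c', g, hrel, rfl, rfl⟩ :=
    UniqueFactorizationMonoid.exists_reduced_factors' d c hc
  have hg : g ≠ 0 := left_ne_zero_of_mul hc
  have hd' (i) : d' ∣ v i := by
    have hdvd := hd i
    rw [mul_assoc, mul_dvd_mul_iff_left hg] at hdvd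
    exact hrel.dvd_of_dvd_mul_left hdvd
  exact mul_dvd_mul_left g (isUnit_of_forall_dvd hv0 hv hd').dvd

end NoCommonPrimeDivisor

section FractionField

variable {R K ι : Type*} [CommRing R] [IsDomain R] [UniqueFactorizationMonoid R] [Field K]
  [Algebra R K] [IsFractionRing R K] {v w : ι → R} {e : K}

lemma exists_eq_inv_algebraMap (hv0 : ∃ i, v i ≠ 0) (hv : ∀ p, Prime p → ∃ i, ¬ p ∣ v i)
    (h : ∀ i, algebraMap R K (v i) = e * algebraMap R K (w i)) :
    ∃ Γ : R, Γ ≠ 0 ∧ e = (algebraMap R K Γ)⁻¹ := by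
  obtain ⟨a, b, hb, rfl⟩ := IsFractionRing.div_surjective R e
  have hbK : algebraMap R K b ≠ 0 := IsFractionRing.to_map_ne_zero_of_mem_nonZeroDivisors hb
  have hab (i) : a ∣ b * v i := by
    refine ⟨w i, IsFractionRing.injective R K ?_⟩
    rw [map_mul, map_mul, h, ← mul_assoc, mul_div_cancel₀ _ hbK]
  obtain ⟨Γ, rfl⟩ := dvd_of_forall_dvd_mul hv0 hv hab
  rw [map_mul] at hbK
  refine ⟨Γ, ?_, ?_⟩
  · rintro rfl
    simp at hbK
  · rw [map_mul, div_mul_cancel_left₀ (left_ne_zero_of_mul hbK)]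

lemma exists_units_eq_algebraMap (hv0 : ∃ i, v i ≠ 0) (hv : ∀ p, Prime p → ∃ i, ¬ p ∣ v i)
    (hw0 : ∃ i, w i ≠ 0) (hw : ∀ p, Prime p → ∃ i, ¬ p ∣ w i) (he : e ≠ 0)
    (h : ∀ i, algebraMap R K (v i) = e * algebraMap R K (w i)) :
    ∃ u : Rˣ, e = algebraMap R K u := by
  obtain ⟨a, -, ha⟩ := exists_eq_inv_algebraMap hv0 hv h
  have h' (i) : algebraMap R K (w i) = e⁻¹ * algebraMap R K (v i) := by
    rw [h, inv_mul_cancel_left₀ he]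
  obtain ⟨b, -, hb⟩ := exists_eq_inv_algebraMap hw0 hw h'
  rw [inv_inj] at hb
  have hba : b * a = 1 := IsFractionRing.injective R K <| by
    rw [map_mul, map_one, ← hb, ← inv_inv (algebraMap R K a), ← ha, mul_inv_cancel₀ he]
  exact ⟨Units.mkOfMulEqOne b a hba, hb⟩

end FractionField

section Polynomial

lemma exists_eval_algebraMap_ne_zero {R A : Type*} [CommRing R] [Infinite R] [CommRing A]
    [IsDomain A] [Algebra R A] [FaithfulSMul R A] {Q : A[X]} (hQ : Q ≠ 0) :
    ∃ m : R, Q.eval (algebraMap R A m) ≠ 0 := by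
  by_contra! h
  refine hQ (eq_zero_of_infinite_isRoot Q ?_)
  refine (Set.infinite_range_of_injective (FaithfulSMul.algebraMap_injective R A)).mono ?_
  rintro _ ⟨m, rfl⟩
  exact h m

lemma algebraMap_prod_pow_eq_eval {R A ι : Type*} [CommSemiring R] [CommSemiring A] [Algebra R A]
    [Fintype ι] {Q : ι → A[X]} {w : ι → R → R}
    (hw : ∀ i m, algebraMap R A (w i m) = (Q i).eval (algebraMap R A m)) (α : ι → ℕ) (m : R) :
    algebraMap R A (∏ i, w i m ^ α i) = (∏ i, Q i ^ α i).eval (algebraMap R A m) := by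
  simp only [map_prod, map_pow, eval_prod, eval_pow, hw]

lemma associated_iff_exists_C_mul {K : Type*} [Field K] {Q Q' : K[X]} :
    Associated Q Q' ↔ ∃ c : K, c ≠ 0 ∧ Q' = C c * Q := by
  constructor
  · rintro ⟨u, rfl⟩
    obtain ⟨c, hc, hcu⟩ := isUnit_iff.1 u.isUnit
    exact ⟨c, hc.ne_zero, by rw [hcu, mul_comm]⟩
  · rintro ⟨c, hc, rfl⟩
    exact (associated_unit_mul_left Q _ (isUnit_C.2 hc.isUnit)).symm

variable {R K : Type*} [CommRing R] [Field K] [Algebra R K]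

/-- The polynomial `Q` is integrally valued, with values `w m = Q(m)`, and totally primitive. The
values are recorded as a function into `R` so that divisibility is taken in `R`, not in `K`. -/
structure IsTotallyPrimitive (Q : K[X]) (w : R → R) : Prop where
  algebraMap_eq_eval : ∀ m, algebraMap R K (w m) = Q.eval (algebraMap R K m)
  exists_not_dvd : ∀ p, Prime p → ∃ m, ¬ p ∣ w m

/-- `P = (1/Γ) · ∏ i, Q i ^ α i` is a factorization of `P` into pairwise non-associated irreducible
totally primitive polynomials `Q i`, with values `w i`. That `Γ` is a greatest common divisor of
the values of the product is a consequence (`dvd_prod_values`, `dvd_of_forall_dvd_prod_values`). -/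
structure IsTotallyPrimitiveFactorization {ι : Type*} [Fintype ι] (P : K[X]) (Γ : R)
    (Q : ι → K[X]) (α : ι → ℕ) (w : ι → R → R) : Prop where
  ne_zero : Γ ≠ 0
  system : IsPrimePowerSystem Q α
  totallyPrimitive : ∀ i, IsTotallyPrimitive (Q i) (w i)
  eq_C_mul_prod : P = C (algebraMap R K Γ)⁻¹ * ∏ i, Q i ^ α i

variable [IsFractionRing R K]

lemma IsTotallyPrimitive.exists_ne_zero [Infinite R] {Q : K[X]} {w : R → R}
    (h : IsTotallyPrimitive Q w) (hQ : Q ≠ 0) : ∃ m, w m ≠ 0 := by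
  obtain ⟨m, hm⟩ := exists_eval_algebraMap_ne_zero (R := R) hQ
  refine ⟨m, fun hwm => hm ?_⟩
  rw [← h.algebraMap_eq_eval, hwm, map_zero]

lemma exists_associated_isTotallyPrimitive [Infinite R] [IsDomain R] [WfDvdMonoid R] {Q : K[X]}
    (hQ : Q ≠ 0) : ∃ (Q' : K[X]) (w : R → R), Associated Q Q' ∧ IsTotallyPrimitive Q' w := by
  obtain ⟨b, hb, hbQ⟩ := IsLocalization.integerNormalization_spec (nonZeroDivisors R) Q
  set q := IsLocalization.integerNormalization (nonZeroDivisors R) Q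
  have hbK : algebraMap R K b ≠ 0 := IsFractionRing.to_map_ne_zero_of_mem_nonZeroDivisors hb
  have hq (m) : algebraMap R K (q.eval m) = algebraMap R K b * Q.eval (algebraMap R K m) := by
    rw [← eval_map_apply, hbQ, ← IsScalarTower.algebraMap_smul K b Q, eval_smul, smul_eq_mul]
  obtain ⟨m₀, hm₀⟩ := exists_eval_algebraMap_ne_zero (R := R) hQ
  have hqm₀ : q.eval m₀ ≠ 0 := fun h => mul_ne_zero hbK hm₀ <| by rw [← hq, h, map_zero]
  obtain ⟨g, w, hgw, hw⟩ :=
    exists_eq_mul_forall_prime_exists_not_dvd (fun m => q.eval m) ⟨m₀, hqm₀⟩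
  have hgK : algebraMap R K g ≠ 0 :=
    (map_ne_zero_iff _ (IsFractionRing.injective R K)).2 (left_ne_zero_of_mul (hgw m₀ ▸ hqm₀))
  refine ⟨C (algebraMap R K b / algebraMap R K g) * Q, w,
    associated_iff_exists_C_mul.2 ⟨_, div_ne_zero hbK hgK, rfl⟩, fun m => ?_, hw⟩
  rw [eval_mul, eval_C, div_mul_eq_mul_div, ← hq, hgw, map_mul, mul_div_cancel_left₀ _ hgK]

namespace IsTotallyPrimitiveFactorization

variable {ι : Type*} [Fintype ι] {P : K[X]} {v : R → R} {Γ : R} {Q : ι → K[X]} {α : ι → ℕ}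
  {w : ι → R → R}

lemma prod_values_eq_mul (h : IsTotallyPrimitiveFactorization P Γ Q α w)
    (hv : ∀ m, algebraMap R K (v m) = P.eval (algebraMap R K m)) (m : R) :
    ∏ i, w i m ^ α i = Γ * v m := by
  have hΓ : algebraMap R K Γ ≠ 0 :=
    (map_ne_zero_iff _ (IsFractionRing.injective R K)).2 h.ne_zero
  apply IsFractionRing.injective R K
  rw [algebraMap_prod_pow_eq_eval fun i => (h.totallyPrimitive i).algebraMap_eq_eval, map_mul, hv,
    h.eq_C_mul_prod, eval_mul, eval_C, mul_inv_cancel_left₀ hΓ]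

lemma dvd_prod_values (h : IsTotallyPrimitiveFactorization P Γ Q α w)
    (hv : ∀ m, algebraMap R K (v m) = P.eval (algebraMap R K m)) (m : R) :
    Γ ∣ ∏ i, w i m ^ α i :=
  ⟨v m, h.prod_values_eq_mul hv m⟩

lemma associated_prod (h : IsTotallyPrimitiveFactorization P Γ Q α w) :
    Associated (∏ i, Q i ^ α i) P :=
  associated_iff_exists_C_mul.2 ⟨_, inv_ne_zero
    ((map_ne_zero_iff _ (IsFractionRing.injective R K)).2 h.ne_zero), h.eq_C_mul_prod⟩

variable [Infinite R] [UniqueFactorizationMonoid R]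

lemma dvd_of_forall_dvd_prod_values (h : IsTotallyPrimitiveFactorization P Γ Q α w)
    (hP : IsTotallyPrimitive P v) (hP0 : P ≠ 0) {d : R} (hd : ∀ m, d ∣ ∏ i, w i m ^ α i) :
    d ∣ Γ :=
  dvd_of_forall_dvd_mul (hP.exists_ne_zero hP0) hP.exists_not_dvd fun m =>
    h.prod_values_eq_mul hP.algebraMap_eq_eval m ▸ hd m

end IsTotallyPrimitiveFactorization

variable [Infinite R] [IsDomain R] [UniqueFactorizationMonoid R]

lemma IsTotallyPrimitive.exists_units_of_associated {Q Q' : K[X]} {w w' : R → R}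
    (h : IsTotallyPrimitive Q w) (h' : IsTotallyPrimitive Q' w') (hQ : Q ≠ 0)
    (hassoc : Associated Q Q') : ∃ u : Rˣ, Q' = C (algebraMap R K u) * Q := by
  have hQ' : Q' ≠ 0 := hassoc.ne_zero_iff.1 hQ
  obtain ⟨c, hc, rfl⟩ := associated_iff_exists_C_mul.1 hassoc
  obtain ⟨u, rfl⟩ := exists_units_eq_algebraMap (h'.exists_ne_zero hQ') h'.exists_not_dvd
    (h.exists_ne_zero hQ) h.exists_not_dvd hc fun m => by
      rw [h'.algebraMap_eq_eval, h.algebraMap_eq_eval, eval_mul, eval_C]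
  exact ⟨u, rfl⟩

theorem IsTotallyPrimitive.exists_factorization {P : K[X]} {v : R → R}
    (hP : IsTotallyPrimitive P v) (hP0 : P ≠ 0) :
    ∃ (Γ : R) (n : ℕ) (Q : Fin n → K[X]) (α : Fin n → ℕ) (w : Fin n → R → R),
      IsTotallyPrimitiveFactorization P Γ Q α w := by
  obtain ⟨n, q, α, hq, hqP⟩ := exists_isPrimePowerSystem_associated_prod_pow hP0
  choose Q w hqQ hQ using fun i =>
    exists_associated_isTotallyPrimitive (R := R) (hq.prime i).ne_zero
  have hQP : Associated (∏ i, Q i ^ α i) P :=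
    (Associated.prod _ _ _ fun i _ => (hqQ i).symm.pow_pow).trans hqP
  obtain ⟨e, -, hPe⟩ := associated_iff_exists_C_mul.1 hQP
  obtain ⟨Γ, hΓ, rfl⟩ := exists_eq_inv_algebraMap (w := fun m => ∏ i, w i m ^ α i)
    (hP.exists_ne_zero hP0) hP.exists_not_dvd fun m => by
      rw [hP.algebraMap_eq_eval, hPe, eval_mul, eval_C,
        algebraMap_prod_pow_eq_eval fun i => (hQ i).algebraMap_eq_eval]
  exact ⟨Γ, n, Q, α, w, hΓ, hq.of_associated hqQ, hQ, hPe⟩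

namespace IsTotallyPrimitiveFactorization

variable {ι κ : Type*} [Fintype ι] [Fintype κ] {P : K[X]} {v : R → R} {Γ Γ' : R}
  {Q : ι → K[X]} {α : ι → ℕ} {w : ι → R → R} {Q' : κ → K[X]} {α' : κ → ℕ} {w' : κ → R → R}

theorem unique (h : IsTotallyPrimitiveFactorization P Γ Q α w)
    (h' : IsTotallyPrimitiveFactorization P Γ' Q' α' w') (hP : IsTotallyPrimitive P v)
    (hP0 : P ≠ 0) :
    Associated Γ Γ' ∧ ∃ σ : ι ≃ κ, (∀ i, α' (σ i) = α i) ∧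
      ∀ i, ∃ u : Rˣ, Q' (σ i) = C (algebraMap R K u) * Q i := by
  obtain ⟨σ, hα, hQ⟩ := h.system.exists_equiv h'.system
    (h.associated_prod.trans h'.associated_prod.symm)
  choose u hu using fun i => (h.totallyPrimitive i).exists_units_of_associated
    (h'.totallyPrimitive (σ i)) (h.system.prime i).ne_zero (hQ i)
  refine ⟨?_, σ, hα, fun i => ⟨u i, hu i⟩⟩
  obtain ⟨m, hm⟩ := hP.exists_ne_zero hP0
  have hvalue (i) : Associated (w i m) (w' (σ i) m) := by
    refine ⟨u i, IsFractionRing.injective R K ?_⟩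
    rw [map_mul, (h.totallyPrimitive i).algebraMap_eq_eval,
      (h'.totallyPrimitive (σ i)).algebraMap_eq_eval, hu, eval_mul, eval_C, mul_comm]
  have hprod : Associated (∏ i, w i m ^ α i) (∏ j, w' j m ^ α' j) := by
    rw [← σ.prod_comp]
    exact Associated.prod _ _ _ fun i _ => hα i ▸ (hvalue i).pow_pow
  rw [h.prod_values_eq_mul hP.algebraMap_eq_eval,
    h'.prod_values_eq_mul hP.algebraMap_eq_eval] at hprod
  exact hprod.of_mul_right (.refl _) hm

end IsTotallyPrimitiveFactorization

theorem stmt11_general {P : K[X]} {v : R → R} (hP : IsTotallyPrimitive P v) (hP0 : P ≠ 0) :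
    ∃ (Γ : R) (n : ℕ) (Q : Fin n → K[X]) (α : Fin n → ℕ) (w : Fin n → R → R),
      IsTotallyPrimitiveFactorization P Γ Q α w ∧
      (∀ m, Γ ∣ ∏ i, w i m ^ α i) ∧ (∀ d, (∀ m, d ∣ ∏ i, w i m ^ α i) → d ∣ Γ) ∧
      ∀ (Γ' : R) (n' : ℕ) (Q' : Fin n' → K[X]) (α' : Fin n' → ℕ) (w' : Fin n' → R → R),
        IsTotallyPrimitiveFactorization P Γ' Q' α' w' →
        Associated Γ Γ' ∧ ∃ σ : Fin n ≃ Fin n', (∀ i, α' (σ i) = α i) ∧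
          ∀ i, ∃ u : Rˣ, Q' (σ i) = C (algebraMap R K u) * Q i := by
  obtain ⟨Γ, n, Q, α, w, h⟩ := hP.exists_factorization hP0
  exact ⟨Γ, n, Q, α, w, h, h.dvd_prod_values hP.algebraMap_eq_eval,
    fun _ => h.dvd_of_forall_dvd_prod_values hP hP0, fun _ _ _ _ _ h' => h.unique h' hP hP0⟩

end Polynomial

/-- Totally primitive factorization: every nonconstant totally primitive
`P ∈ K[X]` (integral values witnessed by `v`) can be written, uniquely up to units of `R`
and the order of the factors, as `P = (1/Γ) · ∏ i, (P i)^(α i)` with `Γ ∈ R` nonzero,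
`α i ≥ 1`, the `P i` pairwise non-associate totally primitive polynomials irreducible in
`K[X]` (each with integral values witnessed by `w i`), and `Γ` a gcd of the value set
`{∏ i, P i (m)^(α i) : m ∈ R}`. -/
theorem stmt11 {R K : Type*} [CommRing R] [IsDomain R] [IsPrincipalIdealRing R]
    [Infinite R] [Field K] [Algebra R K] [IsFractionRing R K]
    (P : K[X]) (v : R → R)
    (hval : ∀ m, algebraMap R K (v m) = P.eval (algebraMap R K m))
    (hnc : 0 < P.natDegree)
    (htp : ∀ p : R, Prime p → ∃ m : R, ¬ p ∣ v m) :
    ∃ (Γ : R) (n : ℕ) (Pl : Fin n → K[X]) (α : Fin n → ℕ) (w : Fin n → R → R),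
      Γ ≠ 0 ∧ (∀ i, 1 ≤ α i) ∧
      (∀ i, Irreducible (Pl i)) ∧
      (∀ i m, algebraMap R K (w i m) = (Pl i).eval (algebraMap R K m)) ∧
      (∀ i, ∀ p : R, Prime p → ∃ m : R, ¬ p ∣ w i m) ∧
      (∀ i j, i ≠ j → ¬ Associated (Pl i) (Pl j)) ∧
      P = Polynomial.C (algebraMap R K Γ)⁻¹ * ∏ i, Pl i ^ α i ∧
      (∀ m : R, Γ ∣ ∏ i, w i m ^ α i) ∧
      (∀ d : R, (∀ m : R, d ∣ ∏ i, w i m ^ α i) → d ∣ Γ) ∧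
      (∀ (Γ' : R) (n' : ℕ) (Pl' : Fin n' → K[X]) (α' : Fin n' → ℕ) (w' : Fin n' → R → R),
        Γ' ≠ 0 → (∀ i, 1 ≤ α' i) →
        (∀ i, Irreducible (Pl' i)) →
        (∀ i m, algebraMap R K (w' i m) = (Pl' i).eval (algebraMap R K m)) →
        (∀ i, ∀ p : R, Prime p → ∃ m : R, ¬ p ∣ w' i m) →
        (∀ i j, i ≠ j → ¬ Associated (Pl' i) (Pl' j)) →
        P = Polynomial.C (algebraMap R K Γ')⁻¹ * ∏ i, Pl' i ^ α' i →
        (∀ m : R, Γ' ∣ ∏ i, w' i m ^ α' i) →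
        (∀ d : R, (∀ m : R, d ∣ ∏ i, w' i m ^ α' i) → d ∣ Γ') →
        Associated Γ Γ' ∧ ∃ σ : Fin n ≃ Fin n', (∀ i, α' (σ i) = α i) ∧
          ∀ i, ∃ u : Rˣ, Pl' (σ i) = Polynomial.C (algebraMap R K (u : R)) * Pl i) := by
  obtain ⟨Γ, n, Q, α, w, h, hdvd, hgcd, huniq⟩ :=
    stmt11_general ⟨hval, htp⟩ (ne_zero_of_natDegree_gt hnc)
  exact ⟨Γ, n, Q, α, w, h.ne_zero, h.system.one_le, fun i => (h.system.prime i).irreducible,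
    fun i => (h.totallyPrimitive i).algebraMap_eq_eval,
    fun i => (h.totallyPrimitive i).exists_not_dvd, h.system.not_associated, h.eq_C_mul_prod,
    hdvd, hgcd, fun Γ' n' Q' α' w' hΓ' hα' hirr' hval' htp' hna' hP' _ _ =>
      huniq Γ' n' Q' α' w' ⟨hΓ', ⟨fun i => (hirr' i).prime, hα', hna'⟩,
        fun i => ⟨hval' i, htp' i⟩, hP'⟩⟩
end
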